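/- Let (x,1) ∈ Fix(P_S ∘ T) and write T(x,1) = (x,λ) with λ ∈ [0,1]. Assume in addition that T(x,1) = P_{cl dom κ}(x,1) or λ = 1. Then for every y ∈ X, writing T(y,1) = (w,μ): (a) ‖T(y,1) − P_S(T(y,1))‖ ≥ ‖T(x,1) − (x,1)‖; (b) |1 − λ| ≤ |1 − μ|; (c) if λ < 1, then μ ≤ λ. -/

import Mathlib

/-! The case `lam = 1` is trivial, since both lower bounds are then `0`. Otherwise `T (x, 1) = (x, lam)`
is the projection of `(x, 1)` onto the closure of `dom κ`, which is a convex cone, so the residual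
`(0, 1 - lam)` lies in the polar cone of `dom κ`: every point of `dom κ` has nonpositive last
coordinate (`snd_nonpos_of_ray`). All values of `T` lie in `dom κ`, because the objective is finite
at `u = 0` (`kappa_polarProx_ne_top`). Hence `μ ≤ 0 ≤ lam < 1`, which yields all three claims. -/

open scoped ENNReal RealInnerProductSpace Pointwise Topology
open Filter

noncomputable section

variable {X : Type*} [NormedAddCommGroup X] [InnerProductSpace ℝ X] [FiniteDimensional ℝ X]

/-- The point `(x, t)` of the lifted space `E = X ×₂ ℝ` (Euclidean product). -/
def pt (x : X) (t : ℝ) : WithLp 2 (X × ℝ) := (WithLp.equiv 2 (X × ℝ)).symm (x, t)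

/-- First (`X`-) coordinate of a point of the lifted space. -/
def fstE (z : WithLp 2 (X × ℝ)) : X := (WithLp.equiv 2 (X × ℝ) z).1

/-- Second (`ℝ`-) coordinate of a point of the lifted space. -/
def sndE (z : WithLp 2 (X × ℝ)) : ℝ := (WithLp.equiv 2 (X × ℝ) z).2

/-- Orthogonal projection `P_S` onto the affine subspace `S = X × {1}`. -/
def PS (z : WithLp 2 (X × ℝ)) : WithLp 2 (X × ℝ) := pt (fstE z) 1

/-- A closed gauge: a convex, lower semicontinuous, positively homogeneous
function `κ : E → [0,∞]` on the lifted space. -/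
def IsClosedGauge (κ : WithLp 2 (X × ℝ) → ℝ≥0∞) : Prop :=
  LowerSemicontinuous κ ∧
  (∀ z w : WithLp 2 (X × ℝ), ∀ a b : ℝ, 0 ≤ a → 0 ≤ b → a + b = 1 →
    κ (a • z + b • w) ≤ ENNReal.ofReal a * κ z + ENNReal.ofReal b * κ w) ∧
  (∀ t : ℝ, 0 ≤ t → ∀ z, κ (t • z) = ENNReal.ofReal t * κ z)

/-- The objective `u ↦ max {κ(u), ‖z − u‖}` defining the polar proximal map. -/
def polarObj (κ : WithLp 2 (X × ℝ) → ℝ≥0∞) (z u : WithLp 2 (X × ℝ)) : ℝ≥0∞ :=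
  max (κ u) (ENNReal.ofReal ‖z - u‖)

/-- `T` is the polar proximal map of `κ`: for every `z`, `T z` is the unique
minimizer of `u ↦ max {κ(u), ‖z − u‖}`. -/
def IsPolarProx (κ : WithLp 2 (X × ℝ) → ℝ≥0∞)
    (T : WithLp 2 (X × ℝ) → WithLp 2 (X × ℝ)) : Prop :=
  ∀ z, (∀ u, polarObj κ z (T z) ≤ polarObj κ z u) ∧
    (∀ u, (∀ v, polarObj κ z u ≤ polarObj κ z v) → u = T z)

theorem norm_pt_sq (x : X) (t : ℝ) : ‖pt x t‖ ^ 2 = ‖x‖ ^ 2 + t ^ 2 := by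
  rw [WithLp.prod_norm_sq_eq_of_L2]
  simp [pt]

theorem pt_sub (x y : X) (s t : ℝ) : pt x s - pt y t = pt (x - y) (s - t) := rfl

theorem norm_pt_zero (t : ℝ) : ‖pt (0 : X) t‖ = |t| := by
  have h := norm_pt_sq (0 : X) t
  rw [norm_zero, zero_pow two_ne_zero, zero_add, ← sq_abs t] at h
  exact (sq_eq_sq₀ (norm_nonneg _) (abs_nonneg _)).1 h

theorem kappa_polarProx_ne_top {κ : WithLp 2 (X × ℝ) → ℝ≥0∞} (hκ : IsClosedGauge κ)
    {T : WithLp 2 (X × ℝ) → WithLp 2 (X × ℝ)} (hT : IsPolarProx κ T) (z : WithLp 2 (X × ℝ)) :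
    κ (T z) ≠ ⊤ := by
  have h0 : κ 0 = 0 := by simpa using hκ.2.2 0 le_rfl 0
  have h := (le_max_left _ _).trans ((hT z).1 0)
  rw [polarObj, h0, zero_max] at h
  exact ne_top_of_le_ne_top ENNReal.ofReal_ne_top h

theorem kappa_add_smul_ne_top {κ : WithLp 2 (X × ℝ) → ℝ≥0∞} (hκ : IsClosedGauge κ)
    {p u : WithLp 2 (X × ℝ)} (hp : κ p ≠ ⊤) (hu : κ u ≠ ⊤) {t : ℝ} (ht : 0 ≤ t) :
    κ (p + t • u) ≠ ⊤ := by
  have h2 : κ ((2 : ℝ) • p) ≠ ⊤ := by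
    rw [hκ.2.2 2 zero_le_two]
    exact ENNReal.mul_ne_top ENNReal.ofReal_ne_top hp
  have h3 : κ ((2 * t) • u) ≠ ⊤ := by
    rw [hκ.2.2 _ (by positivity)]
    exact ENNReal.mul_ne_top ENNReal.ofReal_ne_top hu
  have h := hκ.2.1 ((2 : ℝ) • p) ((2 * t) • u) (1 / 2) (1 / 2) (by norm_num) (by norm_num)
    (by norm_num)
  have e : (1 / 2 : ℝ) • (2 : ℝ) • p + (1 / 2 : ℝ) • (2 * t) • u = p + t • u := by
    module
  rw [e] at h
  exact ne_top_of_le_ne_top (ENNReal.add_ne_top.2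
    ⟨ENNReal.mul_ne_top ENNReal.ofReal_ne_top h2, ENNReal.mul_ne_top ENNReal.ofReal_ne_top h3⟩) h

/-- If moving from `(x, lam)`, `lam < 1`, along the ray spanned by `(w, μ)` never brings one closer
to `(x, 1)`, then `μ ≤ 0`. This is the first-order optimality condition at `(x, lam)`. -/
theorem snd_nonpos_of_ray {x w : X} {lam μ : ℝ} (hl : lam < 1)
    (h : ∀ t : ℝ, 0 ≤ t → ‖pt x 1 - pt x lam‖ ≤ ‖pt x 1 - (pt x lam + t • pt w μ)‖) : μ ≤ 0 := by
  by_contra! hμ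
  set N := ‖w‖ ^ 2 + μ ^ 2 with hN
  have hNpos : 0 < N := by positivity
  -- the minimizer over `t` of the squared distance from `(x, 1)` to the ray
  set t := (1 - lam) * μ / N with htdef
  have ht : 0 < t := div_pos (mul_pos (by linarith) hμ) hNpos
  have htN : t * N = (1 - lam) * μ := div_mul_cancel₀ _ hNpos.ne'
  have e : pt x 1 - (pt x lam + t • pt w μ) = pt (-(t • w)) (1 - lam - t * μ) := by
    rw [show pt x lam + t • pt w μ = pt (x + t • w) (lam + t * μ) from rfl, pt_sub]
    congr 1
    · abel
    · ring
  have h1 := pow_le_pow_left₀ (norm_nonneg _) (h t ht.le) 2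
  rw [e, pt_sub, norm_pt_sq, norm_pt_sq, sub_self, norm_zero, norm_neg, norm_smul, mul_pow,
    Real.norm_eq_abs, sq_abs] at h1
  have h2 : t * ((1 - lam) * μ) ≤ 0 := by
    have h3 : t * (t * N) = t ^ 2 * ‖w‖ ^ 2 + t ^ 2 * μ ^ 2 := by rw [hN]; ring
    rw [htN] at h3
    nlinarith
  have : 0 < t * ((1 - lam) * μ) := mul_pos ht (mul_pos (by linarith) hμ)
  linarith

/-- Let `(x,1) ∈ Fix (P_S ∘ T)` with `T(x,1) = (x,λ)`, `λ ∈ [0,1]`.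
If `T(x,1) = P_{cl dom κ}(x,1)` or `λ = 1`, then for every `y ∈ X`, writing
`T(y,1) = (w,μ)`: (a) `‖T(y,1) − P_S(T(y,1))‖ ≥ ‖T(x,1) − (x,1)‖`;
(b) `|1 − λ| ≤ |1 − μ|`; (c) if `λ < 1` then `μ ≤ λ`. -/
theorem fix_PS_comp_polarProx_proj_case
    (κ : WithLp 2 (X × ℝ) → ℝ≥0∞) (hκ : IsClosedGauge κ)
    (T : WithLp 2 (X × ℝ) → WithLp 2 (X × ℝ)) (hT : IsPolarProx κ T)
    (Pdom : WithLp 2 (X × ℝ) → WithLp 2 (X × ℝ))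
    (hPdom : ∀ z, Pdom z ∈ closure {w : WithLp 2 (X × ℝ) | κ w ≠ ⊤} ∧
      ∀ w ∈ closure {w : WithLp 2 (X × ℝ) | κ w ≠ ⊤}, ‖z - Pdom z‖ ≤ ‖z - w‖)
    (x : X) (hfix : PS (T (pt x 1)) = pt x 1)
    (lam : ℝ) (hlam : T (pt x 1) = pt x lam) (hlam0 : 0 ≤ lam) (hlam1 : lam ≤ 1)
    (hcase : T (pt x 1) = Pdom (pt x 1) ∨ lam = 1) :
    ∀ (y w : X) (μ : ℝ), T (pt y 1) = pt w μ →
      ‖T (pt y 1) - PS (T (pt y 1))‖ ≥ ‖T (pt x 1) - pt x 1‖ ∧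
      |1 - lam| ≤ |1 - μ| ∧
      (lam < 1 → μ ≤ lam) := by
  intro y w μ hμ
  have hres : ‖T (pt y 1) - PS (T (pt y 1))‖ = |1 - μ| := by
    rw [hμ, show PS (pt w μ) = pt w 1 from rfl, pt_sub, sub_self, norm_pt_zero, abs_sub_comm]
  have hres' : ‖T (pt x 1) - pt x 1‖ = |1 - lam| := by
    rw [hlam, pt_sub, sub_self, norm_pt_zero, abs_sub_comm]
  rw [hres, hres']
  suffices hkey : lam < 1 → μ ≤ 0 by
    have hb : |1 - lam| ≤ |1 - μ| := by
      rcases hlam1.lt_or_eq with hl | rfl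
      · have := hkey hl
        rw [abs_of_nonneg (by linarith), abs_of_nonneg (by linarith)]
        linarith
      · simp
    exact ⟨hb, hb, fun hl => (hkey hl).trans hlam0⟩
  intro hl
  have hproj : Pdom (pt x 1) = pt x lam := by
    rcases hcase with h | h
    · rw [← h, hlam]
    · exact absurd h hl.ne
  refine snd_nonpos_of_ray (x := x) (w := w) hl fun t ht => ?_
  rw [← hproj]
  refine (hPdom _).2 _ (subset_closure ?_)
  rw [hproj, ← hlam, ← hμ]
  exact kappa_add_smul_ne_top hκ (kappa_polarProx_ne_top hκ hT _)
    (kappa_polarProx_ne_top hκ hT _) ht
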